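/- For all p ∈ ℕ and t ∈ [0,T) one has the explicit moment formula E[|Y_t|^{2p}] = ∑_{ℓ=0}^{p} [(2p−2+ν)!! / (2(p−ℓ)−2+ν)!!] · (p choose ℓ) · (E[|q−y|^{2(p−ℓ)}]/T^{2(p−ℓ)}) · t^ℓ/(T^ℓ (T−t)^ℓ). -/

import Mathlib

open MeasureTheory ProbabilityTheory

/-- A `ν`-dimensional Brownian motion `B` on a filtered probability space
`(Ω, m, (ℱ_t), P)` satisfying the usual conditions: the filtration is complete and
right-continuous, `B` has continuous paths on `[0,∞)` with `B_0 = 0`, `B` is adapted, and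
for `0 ≤ s ≤ t` the increment `B_t − B_s` is independent of `ℱ_s` and is a centered
Gaussian vector with covariance matrix `(t−s)·Id` (componentwise iid `N(0, t−s)`). -/
structure IsBrownianMotion {Ω : Type*} [m : MeasurableSpace Ω] (P : Measure Ω) (ν : ℕ)
    (F : Filtration ℝ m) (B : ℝ → Ω → Fin ν → ℝ) : Prop where
  complete : ∀ (t : ℝ) (A : Set Ω), P A = 0 → MeasurableSet[F t] A
  rightCont : ∀ t : ℝ, (F t : MeasurableSpace Ω) = ⨅ s ∈ Set.Ioi t, (F s : MeasurableSpace Ω)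
  contPaths : ∀ ω : Ω, ContinuousOn (fun t => B t ω) (Set.Ici 0)
  start : ∀ ω : Ω, B 0 ω = 0
  adapted : ∀ t : ℝ, Measurable[F t] (B t)
  indepIncr : ∀ s t : ℝ, 0 ≤ s → s ≤ t →
    Indep (MeasurableSpace.comap (fun ω => B t ω - B s ω) inferInstance) (F s) P
  gaussIncr : ∀ s t : ℝ, 0 ≤ s → s ≤ t →
    Measure.map (fun ω => B t ω - B s ω) P =
      Measure.pi fun _ : Fin ν => gaussianReal 0 (Real.toNNReal (t - s))

/-- The Brownian bridge from `q` to `y` in time `T` driven by the path `B`: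
`b_t = (t/T)y + ((T−t)/T)q + B_t − (T−t)∫₀ᵗ (T−s)⁻² B_s ds` for `t < T`, and `b_t = y`
otherwise (in particular `b_T = y`). -/
noncomputable def bridgeBB (ν : ℕ) (T : ℝ) (q y : Fin ν → ℝ) (B : ℝ → Fin ν → ℝ)
    (t : ℝ) : Fin ν → ℝ :=
  if t < T then
    (t / T) • y + ((T - t) / T) • q + B t -
      (T - t) • ∫ s in (0 : ℝ)..t, ((T - s) ^ 2)⁻¹ • B s
  else y

/-- Double factorial with integer argument, using the conventions
`(2j)‼ = 2^j j!`, `(2j+1)‼ = (2j+1)!/(2j)‼` for `j ∈ ℕ₀` and `(−1)‼ = 1`. -/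
noncomputable def dfacZ (n : ℤ) : ℝ :=
  if n < 0 then 1 else (Nat.doubleFactorial n.toNat : ℝ)


open scoped NNReal

namespace BridgeAux

lemma integrable_pow_gaussian (x : ℝ) (v : ℝ≥0) (n : ℕ) :
    Integrable (fun z : ℝ => z ^ n) (gaussianReal x v) := by
  have h := (memLp_id_gaussianReal (μ := x) (v := v) (n : ℝ≥0)).integrable_norm_pow' 
  simp only [id] at h
  refine (integrable_norm_iff (by fun_prop)).1 ?_
  simpa [norm_pow] using h

lemma stein_one (x : ℝ) (v : ℝ≥0) (n : ℕ) :
    ∫ z, z ^ (n + 1) ∂(gaussianReal x v) =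
      x * ∫ z, z ^ n ∂(gaussianReal x v) + v * (n * ∫ z, z ^ (n - 1) ∂(gaussianReal x v)) := by
  by_cases hv : v = 0
  · subst hv
    simp [pow_succ, mul_comm]
  have hv' : (v : ℝ) ≠ 0 := by exact_mod_cast hv
  have hI : ∀ k : ℕ, Integrable (fun z => gaussianPDFReal x v z * z ^ k) := by
    intro k
    have h := integrable_pow_gaussian x v k
    rw [gaussianReal_of_var_ne_zero _ hv,
      integrable_withDensity_iff_integrable_smul' (measurable_gaussianPDF x v)
        (Filter.Eventually.of_forall fun _ => gaussianPDF_lt_top)] at h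
    simpa [toReal_gaussianPDF] using h
  have hd : ∀ z, HasDerivAt (fun z => gaussianPDFReal x v z * z ^ n)
      (-(v : ℝ)⁻¹ * (gaussianPDFReal x v z * z ^ (n + 1)) +
        x * (v : ℝ)⁻¹ * (gaussianPDFReal x v z * z ^ n) +
        n * (gaussianPDFReal x v z * z ^ (n - 1))) z := by
    intro z
    have h1 : HasDerivAt (gaussianPDFReal x v)
        (gaussianPDFReal x v z * (-(z - x) / v)) z := by
      rw [gaussianPDFReal_def]
      have h2 : HasDerivAt (fun z : ℝ => -(z - x) ^ 2 / (2 * v)) (-(z - x) / v) z := by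
        have := ((((hasDerivAt_id z).sub_const x).pow 2).neg).div_const (2 * (v : ℝ))
        refine this.congr_deriv ?_
        simp; field_simp; ring
      have := (h2.exp).const_mul (Real.sqrt (2 * Real.pi * v))⁻¹
      refine this.congr_deriv ?_
      ring
    refine (h1.mul (hasDerivAt_pow n z)).congr_deriv ?_
    field_simp
    ring
  have h0 := integral_eq_zero_of_hasDerivAt_of_integrable hd
    ((((hI _).const_mul _).add ((hI _).const_mul _)).add ((hI _).const_mul _)) (hI n)
  rw [integral_add (by exact ((hI _).const_mul _).add ((hI _).const_mul _)) ((hI _).const_mul _),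
    integral_add ((hI _).const_mul _) ((hI _).const_mul _), integral_const_mul,
    integral_const_mul, integral_const_mul] at h0
  simp only [integral_gaussianReal_eq_integral_smul hv, smul_eq_mul]
  field_simp at h0
  linarith

section multi

variable {ν : ℕ} (x : Fin ν → ℝ) (v : ℝ≥0)

/-- Product Gaussian measure with mean `x` and variance `v` in each coordinate. -/
noncomputable def gpi : Measure (Fin ν → ℝ) := Measure.pi fun i => gaussianReal (x i) v

instance : IsProbabilityMeasure (gpi x v) := by unfold gpi; infer_instance

lemma integrable_monomial (u : Fin ν →₀ ℕ) :
    Integrable (fun z : Fin ν → ℝ => ∏ i, z i ^ u i) (gpi x v) :=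
  Integrable.fintype_prod (μ := fun i => gaussianReal (x i) v)
    (f := fun i (z : ℝ) => z ^ u i) fun _ => integrable_pow_gaussian _ _ _

lemma integral_monomial (u : Fin ν →₀ ℕ) :
    ∫ z, ∏ i, z i ^ u i ∂(gpi x v) = ∏ i, ∫ z, z ^ u i ∂(gaussianReal (x i) v) :=
  integral_fintype_prod_eq_prod (𝕜 := ℝ) (fun i (z : ℝ) => z ^ u i)

lemma integrable_eval (f : MvPolynomial (Fin ν) ℝ) :
    Integrable (fun z => MvPolynomial.eval z f) (gpi x v) := by
  induction f using MvPolynomial.induction_on' with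
  | monomial u a =>
    simp only [MvPolynomial.eval_monomial, Finsupp.prod_fintype _ _ (fun _ => pow_zero _)]
    exact (integrable_monomial x v u).const_mul a
  | add f g hf hg =>
    simp only [map_add]
    exact hf.add hg

/-- expectation of a polynomial -/
noncomputable def Ex (f : MvPolynomial (Fin ν) ℝ) : ℝ := ∫ z, MvPolynomial.eval z f ∂(gpi x v)

lemma Ex_add (f g : MvPolynomial (Fin ν) ℝ) : Ex x v (f + g) = Ex x v f + Ex x v g := by
  unfold Ex
  simp only [map_add]
  exact integral_add (integrable_eval x v f) (integrable_eval x v g)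

lemma Ex_C_mul (c : ℝ) (f : MvPolynomial (Fin ν) ℝ) :
    Ex x v (MvPolynomial.C c * f) = c * Ex x v f := by
  unfold Ex
  simp only [map_mul, MvPolynomial.eval_C]
  exact integral_const_mul _ _

lemma Ex_sum {ι : Type*} (s : Finset ι) (f : ι → MvPolynomial (Fin ν) ℝ) :
    Ex x v (∑ i ∈ s, f i) = ∑ i ∈ s, Ex x v (f i) := by
  unfold Ex
  simp only [map_sum]
  exact integral_finsetSum _ fun i _ => integrable_eval x v (f i)

lemma Ex_monomial (u : Fin ν →₀ ℕ) (a : ℝ) : Ex x v (MvPolynomial.monomial u a) =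
    a * ∏ i, ∫ z, z ^ u i ∂(gaussianReal (x i) v) := by
  unfold Ex
  simp only [MvPolynomial.eval_monomial, Finsupp.prod_fintype _ _ (fun _ => pow_zero _)]
  rw [integral_const_mul, integral_monomial]

lemma Ex_stein (i : Fin ν) (f : MvPolynomial (Fin ν) ℝ) :
    Ex x v (MvPolynomial.X i * f) = x i * Ex x v f + v * Ex x v (MvPolynomial.pderiv i f) := by
  induction f using MvPolynomial.induction_on' with
  | monomial u a =>
    rw [MvPolynomial.pderiv_monomial, MvPolynomial.X, MvPolynomial.monomial_mul, Ex_monomial,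
      Ex_monomial, Ex_monomial]
    rw [← Finset.mul_prod_erase _ _ (Finset.mem_univ i),
      ← Finset.mul_prod_erase _ _ (Finset.mem_univ i),
      ← Finset.mul_prod_erase _ _ (Finset.mem_univ i)]
    have e1 : ∀ j ∈ Finset.univ.erase i,
        ∫ z, z ^ ((Finsupp.single i 1 + u : Fin ν →₀ ℕ) j) ∂(gaussianReal (x j) v) =
        ∫ z, z ^ (u j) ∂(gaussianReal (x j) v) := by
      intro j hj
      have := Finset.ne_of_mem_erase hj
      simp [this.symm]
    have e2 : ∀ j ∈ Finset.univ.erase i,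
        ∫ z, z ^ ((u - Finsupp.single i 1 : Fin ν →₀ ℕ) j) ∂(gaussianReal (x j) v) =
        ∫ z, z ^ (u j) ∂(gaussianReal (x j) v) := by
      intro j hj
      have := Finset.ne_of_mem_erase hj
      simp [this.symm]
    rw [Finset.prod_congr rfl e1, Finset.prod_congr rfl e2]
    have := stein_one (x i) v (u i)
    simp only [Finsupp.add_apply, Finsupp.single_eq_same, Finsupp.tsub_apply]
    rw [add_comm 1 (u i), this]
    ring
  | add f g hf hg =>
    rw [mul_add, Ex_add, hf, hg, Ex_add, map_add, Ex_add]
    ring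

/-- squared norm polynomial -/
noncomputable def Nsq (ν : ℕ) : MvPolynomial (Fin ν) ℝ := ∑ i, MvPolynomial.X i ^ 2

lemma pderiv_Nsq_pow (i : Fin ν) (p : ℕ) : MvPolynomial.pderiv i (Nsq ν ^ (p + 1)) =
    MvPolynomial.C (2 * (p + 1 : ℝ)) * (MvPolynomial.X i * Nsq ν ^ p) := by
  have h : MvPolynomial.pderiv i (Nsq ν) = 2 * MvPolynomial.X i := by
    unfold Nsq
    rw [map_sum, Finset.sum_eq_single i]
    · rw [MvPolynomial.pderiv_pow]; simp
    · intro j _ hj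
      rw [MvPolynomial.pderiv_pow, MvPolynomial.pderiv_X_of_ne hj]; simp
    · simp
  have h2 : (MvPolynomial.C (2 * (p + 1 : ℝ)) : MvPolynomial (Fin ν) ℝ) = 2 * (p + 1) := by
    simp only [map_mul, map_add, map_natCast, map_one, map_ofNat]
  rw [MvPolynomial.pderiv_pow, h, h2]
  push_cast
  ring

/-- `E |z|^{2p}` -/
noncomputable def mA (p : ℕ) : ℝ := Ex x v (Nsq ν ^ p)
/-- `E (x·z) |z|^{2p}` -/
noncomputable def mC (p : ℕ) : ℝ := ∑ i, x i * Ex x v (MvPolynomial.X i * Nsq ν ^ p)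

lemma mA_zero : mA x v 0 = 1 := by simp [mA, Ex]

lemma mC_zero : mC x v 0 = (∑ i, x i ^ 2) * mA x v 0 := by
  simp only [mC, Ex_stein, mA, pow_zero]
  simp [sq, Ex]

lemma mC_succ (p : ℕ) : mC x v (p + 1) =
    (∑ i, x i ^ 2) * mA x v (p + 1) + 2 * (p + 1) * v * mC x v p := by
  simp only [mC, Ex_stein x v _ (Nsq ν ^ (p + 1)), mA, pderiv_Nsq_pow, Ex_C_mul]
  rw [Finset.sum_mul, Finset.mul_sum, ← Finset.sum_add_distrib]
  refine Finset.sum_congr rfl fun i _ => ?_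
  ring

lemma mA_succ' (p : ℕ) : mA x v (p + 1) = ∑ i, Ex x v (MvPolynomial.X i * (MvPolynomial.X i * Nsq ν ^ p)) := by
  rw [mA, pow_succ', ← Ex_sum]
  congr 1
  conv_lhs => rw [Nsq, Finset.sum_mul]
  refine Finset.sum_congr rfl fun i _ => ?_
  rw [← Nsq]; ring

lemma mA_succ (p : ℕ) : mA x v (p + 1) = mC x v p + v * (ν + 2 * p) * mA x v p := by
  have key : ∀ i : Fin ν, Ex x v (MvPolynomial.X i * (MvPolynomial.X i * Nsq ν ^ p)) =
      x i * Ex x v (MvPolynomial.X i * Nsq ν ^ p) + v * (mA x v p +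
        Ex x v (MvPolynomial.X i * MvPolynomial.pderiv i (Nsq ν ^ p))) := by
    intro i
    rw [Ex_stein, MvPolynomial.pderiv_mul, MvPolynomial.pderiv_X_self, one_mul, Ex_add, mA]
  rw [mA_succ', Finset.sum_congr rfl fun i _ => key i, Finset.sum_add_distrib, ← Finset.mul_sum,
    Finset.sum_add_distrib, ← mC]
  have : ∑ i, Ex x v (MvPolynomial.X i * MvPolynomial.pderiv i (Nsq ν ^ p)) = 2 * p * mA x v p := by
    cases p with
    | zero => simp [Ex]
    | succ p =>
      have e : ∀ i : Fin ν, MvPolynomial.X i * MvPolynomial.pderiv i (Nsq ν ^ (p + 1)) =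
        MvPolynomial.C (2 * (p + 1 : ℝ)) * (MvPolynomial.X i * (MvPolynomial.X i * Nsq ν ^ p)) := by
        intro i; rw [pderiv_Nsq_pow]; ring
      simp only [e, Ex_C_mul]
      rw [← Finset.mul_sum, ← mA_succ']
      push_cast; ring
  rw [this]
  simp
  ring

end multi
end BridgeAux

namespace BridgeAux

section closed

variable (D : ℕ → ℝ) (n a v : ℝ)

/-- closed form of the moments -/
noncomputable def cS (p : ℕ) : ℝ :=
  ∑ j ∈ Finset.range (p + 1), D p / D j * (p.choose j : ℝ) * a ^ j * v ^ (p - j)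

/-- closed form of the auxiliary moments -/
noncomputable def cS' (p : ℕ) : ℝ :=
  ∑ j ∈ Finset.range (p + 1), D (p + 1) / D (j + 1) * (p.choose j : ℝ) * a ^ j * v ^ (p - j)

lemma cS_succ (hD : ∀ k, D (k + 1) = (2 * k + n) * D k) (p : ℕ) : cS D a v (p + 1) = a * cS' D a v p + v * (n + 2 * p) * cS D a v p := by
  have e : cS D a v p =
      ∑ j ∈ Finset.range (p + 2), D p / D j * (p.choose j : ℝ) * a ^ j * v ^ (p - j) := by
    rw [Finset.sum_range_succ, ← cS]; simp
  rw [e, cS, Finset.sum_range_succ' _ (p + 1), Finset.sum_range_succ' _ (p + 1), cS',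
    mul_add (v * (n + 2 * p)), Finset.mul_sum, Finset.mul_sum, ← add_assoc,
    ← Finset.sum_add_distrib]
  congr 1
  · refine Finset.sum_congr rfl fun j hj => ?_
    have hj : j ≤ p := by simpa [Nat.lt_succ_iff] using hj
    rw [Nat.choose_succ_succ, Nat.add_sub_add_right, hD p]
    rcases hj.eq_or_lt with rfl | h
    · simp; ring
    · have : v ^ (p - j) = v * v ^ (p - (j + 1)) := by
        rw [← pow_succ']; congr 1; omega
      rw [this]; push_cast; ring
  · rw [hD p]; simp [pow_succ]; ring

lemma cS'_succ (hD : ∀ k, D (k + 1) = (2 * k + n) * D k) (hD0 : ∀ k, D k ≠ 0) (p : ℕ) :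
    cS' D a v (p + 1) =
    cS D a v (p + 1) + 2 * (p + 1) * v * cS' D a v p := by
  have e : cS' D a v p =
      ∑ j ∈ Finset.range (p + 2), D (p + 1) / D (j + 1) * (p.choose j : ℝ) * a ^ j * v ^ (p - j) := by
    rw [Finset.sum_range_succ, ← cS']; simp
  rw [e, cS, cS', Finset.mul_sum, ← Finset.sum_add_distrib]
  refine Finset.sum_congr rfl fun j hj => ?_
  have hj : j ≤ p + 1 := by simpa [Nat.lt_succ_iff] using hj
  have hDj : D (j + 1) = (2 * j + n) * D j := hD j
  have hn : (2 * j + n) ≠ 0 := by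
    intro h; apply hD0 (j + 1); rw [hDj, h, zero_mul]
  have h0 := hD0 j
  rw [hD (p + 1), hDj]
  rcases hj.eq_or_lt with rfl | h
  · push_cast at hn ⊢
    simp
    left
    rw [div_self h0, div_self (mul_ne_zero hn h0)]
  · have hj' : j ≤ p := by omega
    have hv : v ^ (p + 1 - j) = v * v ^ (p - j) := by
      rw [← pow_succ']; congr 1; omega
    have hc : ((p + 1).choose j : ℝ) * (p + 1 - j) = (p + 1) * p.choose j := by
      have := Nat.choose_mul_succ_eq p j
      have h2 : ((p.choose j * (p + 1) : ℕ) : ℝ) = (((p + 1).choose j * (p + 1 - j) : ℕ) : ℝ) := by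
        rw [this]
      rw [Nat.cast_mul, Nat.cast_mul, Nat.cast_sub hj] at h2
      push_cast at h2
      linarith
    rw [hv]
    field_simp
    push_cast
    linear_combination (2 * D (p + 1) * a ^ j * v * v ^ (p - j)) * hc

end closed

lemma moments_eq {ν : ℕ} (x : Fin ν → ℝ) (v : ℝ≥0) (D : ℕ → ℝ)
    (hD : ∀ k, D (k + 1) = (2 * k + (ν : ℝ)) * D k) (hD0 : ∀ k, D k ≠ 0) (p : ℕ) :
    mA x v p = cS D (∑ i, x i ^ 2) v p ∧
      mC x v p = (∑ i, x i ^ 2) * cS' D (∑ i, x i ^ 2) v p := by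
  induction p with
  | zero =>
    rw [mC_zero, mA_zero]
    simp [cS, cS', hD0]
  | succ p ih =>
    have h1 : mA x v (p + 1) = cS D (∑ i, x i ^ 2) v (p + 1) := by
      rw [mA_succ, cS_succ D ν _ _ hD, ih.1, ih.2]
    refine ⟨h1, ?_⟩
    rw [mC_succ, cS'_succ D ν _ _ hD hD0, h1, ih.2]
    ring

/-- the double factorials appearing in the formula -/
noncomputable def dD (ν k : ℕ) : ℝ := dfacZ (2 * (k : ℤ) - 2 + (ν : ℤ))

lemma dD_ne (ν k : ℕ) : dD ν k ≠ 0 := by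
  unfold dD dfacZ
  split_ifs
  · exact one_ne_zero
  · exact_mod_cast (Nat.doubleFactorial_pos _).ne'

lemma dD_succ (ν : ℕ) (hν : 0 < ν) (k : ℕ) : dD ν (k + 1) = (2 * k + (ν : ℝ)) * dD ν k := by
  unfold dD dfacZ
  have h1 : 2 * ((k + 1 : ℕ) : ℤ) - 2 + ν = ((2 * k + ν : ℕ) : ℤ) := by push_cast; ring
  rw [h1, if_neg (by omega), Int.toNat_natCast]
  by_cases h : 2 * k + ν < 2
  · obtain ⟨rfl, rfl⟩ : k = 0 ∧ ν = 1 := by omega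
    simp
  · obtain ⟨r, hr⟩ : ∃ r, 2 * k + ν = r + 2 := ⟨2 * k + ν - 2, by omega⟩
    have h2 : 2 * (k : ℤ) - 2 + ν = (r : ℤ) := by omega
    rw [h2, if_neg (by omega), Int.toNat_natCast, hr, Nat.doubleFactorial_add_two]
    have h3 : (2 * k + ν : ℝ) = r + 2 := by exact_mod_cast hr
    rw [h3]; push_cast; ring

lemma gauss_moment {ν : ℕ} (hν : 0 < ν) (x : Fin ν → ℝ) (v : ℝ≥0) (p : ℕ) :
    Integrable (fun z : Fin ν → ℝ => (∑ i, z i ^ 2) ^ p) (gpi x v) ∧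
    ∫ z, (∑ i, z i ^ 2) ^ p ∂(gpi x v) = cS (dD ν) (∑ i, x i ^ 2) v p := by
  constructor
  · simpa [Nsq] using integrable_eval x v (Nsq ν ^ p)
  · rw [← (moments_eq x v (dD ν) (dD_succ ν hν) (dD_ne ν) p).1]
    simp [mA, Ex, Nsq]

end BridgeAux

namespace BridgeAux

open Filter Topology

lemma riemann {E : Type*} [NormedAddCommGroup E] [NormedSpace ℝ E] [CompleteSpace E]
    (f : ℝ → ℝ) (h : ℝ → E) (t : ℝ) (ht : 0 ≤ t) (hf : ContinuousOn f (Set.Icc 0 t))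
    (hh : ContinuousOn h (Set.Icc 0 t)) (θ : ℕ) (hθ : θ ≤ 1) :
    Tendsto (fun n : ℕ => ∑ k ∈ Finset.range n,
      (∫ s in (t * ((k : ℕ) / n : ℝ))..(t * (((k + 1 : ℕ) : ℝ) / n)), f s) •
        h (t * (((k + θ : ℕ) : ℝ) / n)))
      atTop (𝓝 (∫ s in (0 : ℝ)..t, f s • h s)) := by
  obtain ⟨K, hK⟩ := isCompact_Icc.exists_bound_of_continuousOn hf
  have hK0 : 0 ≤ K := (norm_nonneg _).trans (hK 0 ⟨le_rfl, ht⟩)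
  have huc := isCompact_Icc.uniformContinuousOn_of_continuous hh
  rw [Metric.uniformContinuousOn_iff] at huc
  rw [Metric.tendsto_atTop]
  intro ε hε
  have hpos : 0 < K * t + 1 := by positivity
  obtain ⟨δ, hδ, hδ'⟩ := huc (ε / (K * t + 1)) (by positivity)
  obtain ⟨N, hN⟩ := exists_nat_gt (t / δ)
  refine ⟨N + 1, fun n hn => ?_⟩
  have hn0 : (0 : ℝ) < n := by exact_mod_cast (by omega : 0 < n)
  have hnδ : t / n < δ := by
    rw [div_lt_iff₀ hn0]
    rw [div_lt_iff₀ hδ] at hN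
    have : (N : ℝ) < n := by exact_mod_cast (by omega : N < n)
    nlinarith
  set σ : ℕ → ℝ := fun k => t * ((k : ℝ) / n) with hσ
  have hmono : Monotone σ := by
    intro a b hab
    have : (a : ℝ) ≤ b := by exact_mod_cast hab
    simp only [hσ]; gcongr
  have hσ0 : σ 0 = 0 := by simp [hσ]
  have hσn : σ n = t := by simp [hσ, hn0.ne']
  have hσs : ∀ k, σ (k + 1) - σ k = t / n := by
    intro k; simp only [hσ]; push_cast; field_simp; ring
  have hmem : ∀ k ≤ n, σ k ∈ Set.Icc 0 t := fun k hk =>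
    ⟨hσ0 ▸ hmono (Nat.zero_le k), hσn ▸ hmono hk⟩
  have hsub : ∀ k < n, Set.uIcc (σ k) (σ (k + 1)) ⊆ Set.Icc 0 t := by
    intro k hk
    rw [Set.uIcc_of_le (hmono (Nat.le_succ k))]
    exact Set.Icc_subset_Icc (hmem k hk.le).1 (hmem (k + 1) hk).2
  have hI : ∀ k < n, IntervalIntegrable (fun s => f s • h s) volume (σ k) (σ (k + 1)) :=
    fun k hk => ((hf.smul hh).mono (hsub k hk)).intervalIntegrable
  have hIf : ∀ k < n, IntervalIntegrable f volume (σ k) (σ (k + 1)) :=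
    fun k hk => (hf.mono (hsub k hk)).intervalIntegrable
  have hsum := intervalIntegral.sum_integral_adjacent_intervals hI
  rw [hσ0, hσn] at hsum
  rw [← hsum, dist_eq_norm, ← Finset.sum_sub_distrib]
  have hterm : ∀ k ∈ Finset.range n, ‖(∫ s in (σ k)..(σ (k + 1)), f s) • h (σ (k + θ)) -
      ∫ s in (σ k)..(σ (k + 1)), f s • h s‖ ≤ K * (ε / (K * t + 1)) * (t / n) := by
    intro k hk
    have hk : k < n := by simpa using hk
    rw [← intervalIntegral.integral_smul_const, ← intervalIntegral.integral_sub _ (hI k hk)]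
    · have := intervalIntegral.norm_integral_le_of_norm_le_const (a := σ k) (b := σ (k + 1))
        (f := fun s => f s • h (σ (k + θ)) - f s • h s) (C := K * (ε / (K * t + 1))) ?_
      · rwa [hσs, abs_of_nonneg (by positivity)] at this
      · intro s hs
        have hs' := Set.uIoc_subset_uIcc hs
        have hsI := hsub k hk hs'
        rw [Set.uIcc_of_le (hmono (Nat.le_succ k))] at hs'
        rw [← smul_sub, norm_smul]
        have hd : dist (h (σ (k + θ))) (h s) < ε / (K * t + 1) := by
          refine hδ' _ (hmem _ (by omega)) _ hsI ?_
          have h1 : σ k ≤ σ (k + θ) := hmono (by omega)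
          have h2 : σ (k + θ) ≤ σ (k + 1) := hmono (by omega)
          have h3 := hσs k
          rw [Real.dist_eq, abs_lt]
          constructor <;> linarith [hs'.1, hs'.2]
        rw [dist_eq_norm] at hd
        exact mul_le_mul (hK s hsI) hd.le (norm_nonneg _) hK0
    · exact ((hf.mono (hsub k hk)).smul continuousOn_const).intervalIntegrable
  refine lt_of_le_of_lt (norm_sum_le_of_le _ hterm) ?_
  rw [Finset.sum_const, Finset.card_range, nsmul_eq_mul]
  have : (n : ℝ) * (K * (ε / (K * t + 1)) * (t / n)) = ε * ((K * t) / (K * t + 1)) := by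
    field_simp
  rw [this]
  have : (K * t) / (K * t + 1) < 1 := by rw [div_lt_one hpos]; linarith
  nlinarith

lemma hasDerivAt_inv_sub (T s : ℝ) (h : s < T) :
    HasDerivAt (fun s : ℝ => (T - s)⁻¹) ((T - s) ^ 2)⁻¹ s := by
  have h0 : T - s ≠ 0 := by linarith [sub_pos.2 h]
  have := ((hasDerivAt_id s).const_sub T).inv h0
  refine this.congr_deriv ?_
  simp

lemma integral_inv_sq (T a b : ℝ) (ha : a < T) (hb : b < T) :
    ∫ s in a..b, ((T - s) ^ 2)⁻¹ = (T - b)⁻¹ - (T - a)⁻¹ := by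
  have hlt : ∀ s ∈ Set.uIcc a b, s < T := by
    intro s hs
    exact hs.2.trans_lt (max_lt ha hb)
  refine intervalIntegral.integral_eq_sub_of_hasDerivAt
    (fun s hs => hasDerivAt_inv_sub T s (hlt s hs)) ?_
  refine ContinuousOn.intervalIntegrable ?_
  refine ContinuousOn.inv₀ (by fun_prop) fun s hs => ?_
  have := sub_pos.2 (hlt s hs)
  positivity

/-- discretised stochastic integral -/
noncomputable def Gn {ν : ℕ} (T t : ℝ) (b : ℝ → Fin ν → ℝ) (n : ℕ) : Fin ν → ℝ :=
  ∑ k ∈ Finset.range n, (T - t * ((k : ℝ) / n))⁻¹ •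
    (b (t * (((k + 1 : ℕ) : ℝ) / n)) - b (t * ((k : ℝ) / n)))

/-- the stochastic integral -/
noncomputable def Gi {ν : ℕ} (T t : ℝ) (b : ℝ → Fin ν → ℝ) : Fin ν → ℝ :=
  (T - t)⁻¹ • b t - ∫ s in (0 : ℝ)..t, ((T - s) ^ 2)⁻¹ • b s

lemma tendsto_Gn {ν : ℕ} (T t : ℝ) (ht : 0 ≤ t) (htT : t < T) (b : ℝ → Fin ν → ℝ)
    (hb : ContinuousOn b (Set.Ici 0)) (hb0 : b 0 = 0) :
    Tendsto (Gn T t b) atTop (𝓝 (Gi T t b)) := by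
  have hc : ContinuousOn (fun s : ℝ => ((T - s) ^ 2)⁻¹) (Set.Icc 0 t) := by
    refine ContinuousOn.inv₀ (by fun_prop) fun s hs => ?_
    have := sub_pos.2 (hs.2.trans_lt htT)
    positivity
  have h := riemann (fun s : ℝ => ((T - s) ^ 2)⁻¹) b t ht hc
    (hb.mono Set.Icc_subset_Ici_self) 1 le_rfl
  refine (h.const_sub ((T - t)⁻¹ • b t)).congr' ?_
  filter_upwards [eventually_gt_atTop 0] with n hn
  have hn0 : (0 : ℝ) < n := by exact_mod_cast hn
  have hlt : ∀ k : ℕ, k ≤ n → t * ((k : ℝ) / n) < T := by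
    intro k hk
    have : (k : ℝ) / n ≤ 1 := by rw [div_le_one hn0]; exact_mod_cast hk
    nlinarith
  have e1 : ∀ k ∈ Finset.range n,
      (∫ s in (t * ((k : ℕ) / n : ℝ))..(t * (((k + 1 : ℕ) : ℝ) / n)), ((T - s) ^ 2)⁻¹) •
        b (t * (((k + 1 : ℕ) : ℝ) / n)) =
      ((T - t * (((k + 1 : ℕ) : ℝ) / n))⁻¹ • b (t * (((k + 1 : ℕ) : ℝ) / n)) -
        (T - t * ((k : ℝ) / n))⁻¹ • b (t * ((k : ℝ) / n))) -
      (T - t * ((k : ℝ) / n))⁻¹ •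
        (b (t * (((k + 1 : ℕ) : ℝ) / n)) - b (t * ((k : ℝ) / n))) := by
    intro k hk
    have hk : k < n := by simpa using hk
    rw [integral_inv_sq T _ _ (hlt k hk.le) (hlt (k + 1) hk), sub_smul, smul_sub]
    abel
  rw [Finset.sum_congr rfl e1, Finset.sum_sub_distrib,
    Finset.sum_range_sub (fun k : ℕ => (T - t * ((k : ℝ) / n))⁻¹ • b (t * ((k : ℝ) / n))), ← Gn]
  simp [hn0.ne', hb0]

lemma tendsto_var (T t : ℝ) (ht : 0 ≤ t) (htT : t < T) :
    Tendsto (fun n : ℕ => ∑ k ∈ Finset.range n, ((T - t * ((k : ℝ) / n))⁻¹) ^ 2 *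
      (t * (((k + 1 : ℕ) : ℝ) / n) - t * ((k : ℝ) / n))) atTop
      (𝓝 (t / (T * (T - t)))) := by
  have hc : ContinuousOn (fun s : ℝ => ((T - s) ^ 2)⁻¹) (Set.Icc 0 t) := by
    refine ContinuousOn.inv₀ (by fun_prop) fun s hs => ?_
    have := sub_pos.2 (hs.2.trans_lt htT)
    positivity
  have h := riemann (fun _ : ℝ => (1 : ℝ)) (fun s : ℝ => ((T - s) ^ 2)⁻¹) t ht continuousOn_const
    hc 0 (by norm_num)
  have hT : 0 < T := by linarith
  have hTt : 0 < T - t := by linarith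
  have e : ∫ s in (0 : ℝ)..t, (1 : ℝ) • ((T - s) ^ 2)⁻¹ = t / (T * (T - t)) := by
    simp only [one_smul]
    rw [integral_inv_sq T 0 t hT htT, sub_zero]
    field_simp; ring
  rw [e] at h
  refine h.congr fun n => Finset.sum_congr rfl fun k _ => ?_
  simp [mul_comm]

end BridgeAux

namespace BridgeAux

open Filter Topology Complex

/-- quadratic form of a dual vector -/
noncomputable def qf {ν : ℕ} (L : StrongDual ℝ (Fin ν → ℝ)) : ℝ := ∑ i, L (Pi.single i 1) ^ 2

lemma charFunDual_gpi {ν : ℕ} (v : ℝ≥0) (L : StrongDual ℝ (Fin ν → ℝ)) :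
    charFunDual (Measure.pi fun _ : Fin ν => gaussianReal 0 v) L =
      cexp (-((qf L * v / 2 : ℝ) : ℂ)) := by
  rw [charFunDual_pi]
  have : ∀ i : Fin ν, charFunDual (gaussianReal 0 v) (L.comp (.single ℝ (fun _ => ℝ) i)) =
      cexp (-((L (Pi.single i 1) ^ 2 * v / 2 : ℝ) : ℂ)) := by
    intro i
    have h := charFun_gaussianReal (μ := 0) (v := v) (L (Pi.single i 1))
    rw [charFun_apply_real] at h
    rw [charFunDual_apply]
    have e : ∀ z : ℝ, (L.comp (.single ℝ (fun _ => ℝ) i)) z = L (Pi.single i 1) * z := by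
      intro z
      have : (Pi.single i z : Fin ν → ℝ) = z • Pi.single i 1 := by
        rw [← Pi.single_smul]; simp
      simp only [ContinuousLinearMap.comp_apply, ContinuousLinearMap.single_apply]
      rw [this, map_smul, smul_eq_mul, mul_comm]
    simp only [e]
    push_cast
    rw [h]
    congr 1
    push_cast
    ring
  rw [Finset.prod_congr rfl fun i _ => this i, ← Complex.exp_sum]
  congr 1
  rw [Finset.sum_neg_distrib, ← Complex.ofReal_sum, qf, Finset.sum_mul, Finset.sum_div]

variable {Ω : Type*} [m : MeasurableSpace Ω] {P : Measure Ω} [IsProbabilityMeasure P]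
    {ν : ℕ} {F : Filtration ℝ m} {B : ℝ → Ω → Fin ν → ℝ}

lemma meas_sum (hB : IsBrownianMotion P ν F B) (σ c : ℕ → ℝ) (hσ : Monotone σ) (n : ℕ) :
    Measurable[F (σ n)] (fun ω => ∑ k ∈ Finset.range n, c k • (B (σ (k + 1)) ω - B (σ k) ω)) := by
  refine Finset.measurable_fun_sum _ fun k hk => ?_
  have hk : k < n := by simpa using hk
  exact (((hB.adapted (σ (k + 1))).mono (F.mono (hσ hk)) le_rfl).sub
    ((hB.adapted (σ k)).mono (F.mono (hσ hk.le)) le_rfl)).const_smul (c k)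

lemma char_sum (hB : IsBrownianMotion P ν F B) (g : Ω → ℂ) (hg : Measurable[F 0] g)
    (σ c : ℕ → ℝ) (hσ : Monotone σ) (hσ0 : 0 ≤ σ 0) (L : StrongDual ℝ (Fin ν → ℝ)) (n : ℕ) :
    ∫ ω, g ω * cexp (L (∑ k ∈ Finset.range n, c k • (B (σ (k + 1)) ω - B (σ k) ω)) * I) ∂P =
      (∫ ω, g ω ∂P) * cexp (-((qf L / 2 *
        ∑ k ∈ Finset.range n, c k ^ 2 * (σ (k + 1) - σ k) : ℝ) : ℂ)) := by
  induction n with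
  | zero => simp
  | succ n ih =>
    have hn0 : 0 ≤ σ n := hσ0.trans (hσ (Nat.zero_le n))
    have hle : σ n ≤ σ (n + 1) := hσ (Nat.le_succ n)
    set X : Ω → ℂ := fun ω => g ω *
      cexp (L (∑ k ∈ Finset.range n, c k • (B (σ (k + 1)) ω - B (σ k) ω)) * I) with hX
    set Z : Ω → ℂ := fun ω => cexp (L (c n • (B (σ (n + 1)) ω - B (σ n) ω)) * I) with hZ
    have hXm : Measurable[F (σ n)] X := by
      have h1 : Measurable[F (σ n)] g := hg.mono (F.mono hn0) le_rfl
      have h2 : Measurable (fun z : Fin ν → ℝ => cexp (L z * I)) :=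
        (by fun_prop : Continuous (fun z : Fin ν → ℝ => cexp (L z * I))).measurable
      exact h1.mul (h2.comp (meas_sum hB σ c hσ n))
    have hψ : Measurable (fun z : Fin ν → ℝ => cexp (L (c n • z) * I)) :=
      (by fun_prop : Continuous (fun z : Fin ν → ℝ => cexp (L (c n • z) * I))).measurable
    have hΔ : Measurable (fun ω => B (σ (n + 1)) ω - B (σ n) ω) :=
      ((hB.adapted _).mono (F.le _) le_rfl).sub ((hB.adapted _).mono (F.le _) le_rfl)
    have hind : X ⟂ᵢ[P] Z := by
      rw [IndepFun_iff_Indep]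
      refine indep_of_indep_of_le_right (indep_of_indep_of_le_left
        (hB.indepIncr (σ n) (σ (n + 1)) hn0 hle).symm hXm.comap_le) ?_
      have : Z = (fun z : Fin ν → ℝ => cexp (L (c n • z) * I)) ∘
        (fun ω => B (σ (n + 1)) ω - B (σ n) ω) := rfl
      rw [this, ← MeasurableSpace.comap_comp]
      exact MeasurableSpace.comap_mono hψ.comap_le
    have e : ∀ ω, g ω * cexp (L (∑ k ∈ Finset.range (n + 1),
        c k • (B (σ (k + 1)) ω - B (σ k) ω)) * I) = X ω * Z ω := by
      intro ω
      simp only [hX, hZ, Finset.sum_range_succ, map_add]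
      push_cast
      rw [add_mul, Complex.exp_add, mul_assoc]
    have hZi : ∫ ω, Z ω ∂P =
        cexp (-((qf L / 2 * (c n ^ 2 * (σ (n + 1) - σ n)) : ℝ) : ℂ)) := by
      have h1 : ∫ ω, Z ω ∂P =
          ∫ z, cexp (L (c n • z) * I) ∂(P.map (fun ω => B (σ (n + 1)) ω - B (σ n) ω)) := by
        rw [integral_map hΔ.aemeasurable hψ.aestronglyMeasurable]
      rw [h1, hB.gaussIncr _ _ hn0 hle]
      have h2 := charFunDual_gpi (ν := ν) (Real.toNNReal (σ (n + 1) - σ n)) (c n • L)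
      rw [charFunDual_apply] at h2
      simp only [map_smul]
      simp only [smul_apply] at h2
      rw [h2, Real.coe_toNNReal _ (sub_nonneg.2 hle)]
      congr 3
      simp only [qf, smul_apply, smul_eq_mul, mul_pow, ← Finset.mul_sum]
      ring
    simp only [e]
    rw [hind.integral_fun_mul_eq_mul_integral
      (hXm.mono (F.le _) le_rfl).aestronglyMeasurable
      (hψ.comp hΔ).aestronglyMeasurable, ih, hZi, mul_assoc, ← Complex.exp_add,
      Finset.sum_range_succ]
    congr 2
    push_cast
    ring

lemma meas_Gn (hB : IsBrownianMotion P ν F B) (T t : ℝ) (n : ℕ) :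
    Measurable (fun ω => Gn T t (fun s => B s ω) n) := by
  unfold Gn
  refine Finset.measurable_fun_sum _ fun k _ => ?_
  exact (((hB.adapted _).mono (F.le _) le_rfl).sub
    ((hB.adapted _).mono (F.le _) le_rfl)).const_smul (T - t * ((k : ℝ) / n))⁻¹

lemma meas_Gi (hB : IsBrownianMotion P ν F B) (T t : ℝ) (ht : 0 ≤ t) (htT : t < T) :
    Measurable (fun ω => Gi T t (fun s => B s ω)) := by
  refine measurable_of_tendsto_metrizable (fun n => meas_Gn hB T t n) ?_
  rw [tendsto_pi_nhds]
  exact fun ω => tendsto_Gn T t ht htT _ (hB.contPaths ω) (hB.start ω)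

lemma char_Gi (hB : IsBrownianMotion P ν F B) (T t : ℝ) (ht : 0 ≤ t) (htT : t < T)
    (g : Ω → ℂ) (hg : Measurable[F 0] g) (hg1 : ∀ ω, ‖g ω‖ ≤ 1)
    (L : StrongDual ℝ (Fin ν → ℝ)) :
    ∫ ω, g ω * cexp (L (Gi T t (fun s => B s ω)) * I) ∂P =
      (∫ ω, g ω ∂P) * cexp (-((qf L / 2 * (t / (T * (T - t))) : ℝ) : ℂ)) := by
  have h1 : Tendsto (fun n : ℕ => ∫ ω, g ω * cexp (L (Gn T t (fun s => B s ω) n) * I) ∂P) atTop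
      (𝓝 (∫ ω, g ω * cexp (L (Gi T t (fun s => B s ω)) * I) ∂P)) := by
    have hc : Continuous (fun z : Fin ν → ℝ => cexp (L z * I)) := by fun_prop
    refine tendsto_integral_of_dominated_convergence (fun _ => (1 : ℝ)) ?_
      (integrable_const _) ?_ ?_
    · intro n
      exact ((hg.mono (F.le _) le_rfl).mul
        (hc.measurable.comp (meas_Gn hB T t n))).aestronglyMeasurable
    · intro n
      refine Eventually.of_forall fun ω => ?_
      rw [norm_mul, Complex.norm_exp_ofReal_mul_I, mul_one]
      exact hg1 ω
    · refine Eventually.of_forall fun ω => ?_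
      exact ((hc.tendsto _).comp
        (tendsto_Gn T t ht htT _ (hB.contPaths ω) (hB.start ω))).const_mul (g ω)
  have hc2 : Continuous (fun r : ℝ => (∫ ω, g ω ∂P) * cexp (-((qf L / 2 * r : ℝ) : ℂ))) := by
    fun_prop
  have h2 := (hc2.tendsto _).comp (tendsto_var T t ht htT)
  refine tendsto_nhds_unique h1 (h2.congr fun n => ?_)
  have hmono : Monotone (fun k : ℕ => t * ((k : ℝ) / n)) := by
    intro a b hab
    have : (a : ℝ) ≤ b := by exact_mod_cast hab
    dsimp only
    gcongr
  exact (char_sum hB g hg (fun k => t * ((k : ℝ) / n)) (fun k => (T - t * ((k : ℝ) / n))⁻¹)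
    hmono (by simp) L n).symm

lemma law_pair (hB : IsBrownianMotion P ν F B) (T t : ℝ) (ht : 0 ≤ t) (htT : t < T)
    (W : Ω → Fin ν → ℝ) (hW : Measurable[F 0] W) :
    P.map (fun ω => (W ω, Gi T t (fun s => B s ω))) =
      (P.map W).prod (gpi (0 : Fin ν → ℝ) (Real.toNNReal (t / (T * (T - t))))) := by
  have hT : 0 < T := by linarith
  have hTt : 0 < T - t := by linarith
  have hWm : Measurable W := hW.mono (F.le 0) le_rfl
  have hGm := meas_Gi hB T t ht htT
  have := Measure.isProbabilityMeasure_map (μ := P) hWm.aemeasurable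
  have := Measure.isProbabilityMeasure_map (μ := P) (hWm.prodMk hGm).aemeasurable
  refine charFunDual_eq_prod_iff.1 fun L => ?_
  have hcL : Continuous (fun z : (Fin ν → ℝ) × (Fin ν → ℝ) => cexp (L z * I)) := by fun_prop
  set L1 := L.comp (.inl ℝ (Fin ν → ℝ) (Fin ν → ℝ)) with hL1
  set L2 := L.comp (.inr ℝ (Fin ν → ℝ) (Fin ν → ℝ)) with hL2
  have hc1 : Continuous (fun z : (Fin ν → ℝ) => cexp (L1 z * I)) := by fun_prop
  have hgm : Measurable[F 0] (fun ω => cexp (L1 (W ω) * I)) := hc1.measurable.comp hW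
  have key := char_Gi hB T t ht htT (fun ω => cexp (L1 (W ω) * I)) hgm
    (fun ω => by rw [Complex.norm_exp_ofReal_mul_I]) L2
  rw [charFunDual_apply, integral_map (hWm.prodMk hGm).aemeasurable hcL.aestronglyMeasurable,
    charFunDual_apply, integral_map hWm.aemeasurable hc1.aestronglyMeasurable]
  have e : ∀ ω, cexp (L (W ω, Gi T t (fun s => B s ω)) * I) =
      cexp (L1 (W ω) * I) * cexp (L2 (Gi T t (fun s => B s ω)) * I) := by
    intro ω
    rw [← Complex.exp_add, ← add_mul, ← Complex.ofReal_add]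
    congr 3
    simp [hL1, hL2, ← map_add]
  simp only [e]
  rw [key]
  congr 1
  have h3 := charFunDual_gpi (ν := ν) (Real.toNNReal (t / (T * (T - t)))) L2
  rw [Real.coe_toNNReal _ (by positivity)] at h3
  simp only [gpi, Pi.zero_apply]
  rw [h3]
  congr 2
  push_cast
  ring

end BridgeAux

namespace BridgeAux

lemma shifted_moment {ν : ℕ} (hν : 0 < ν) (w : Fin ν → ℝ) (v : ℝ≥0) (p : ℕ) :
    Integrable (fun g : Fin ν → ℝ => (∑ i, (w i - g i) ^ 2) ^ p) (gpi (0 : Fin ν → ℝ) v) ∧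
    ∫ g, (∑ i, (w i - g i) ^ 2) ^ p ∂(gpi (0 : Fin ν → ℝ) v) = cS (dD ν) (∑ i, w i ^ 2) v p := by
  have hm : Measurable (fun (g : Fin ν → ℝ) (i : Fin ν) => w i - g i) := by fun_prop
  have hmap : (gpi (0 : Fin ν → ℝ) v).map (fun g i => w i - g i) = gpi w v := by
    have : ∀ i : Fin ν, (gaussianReal 0 v).map (fun z => w i - z) = gaussianReal (w i) v := by
      intro i; rw [gaussianReal_map_const_sub]; simp
    have h := Measure.pi_map_pi (μ := fun _ : Fin ν => gaussianReal 0 v)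
      (f := fun i (z : ℝ) => w i - z) (fun i => by fun_prop)
    simp only [gpi, Pi.zero_apply]
    rw [h]
    simp only [this]
  have hf : Continuous (fun z : Fin ν → ℝ => (∑ i, z i ^ 2) ^ p) := by fun_prop
  have h := gauss_moment hν w v p
  rw [← hmap] at h
  refine ⟨(integrable_map_measure hf.aestronglyMeasurable hm.aemeasurable).1 h.1, ?_⟩
  rw [← h.2, integral_map hm.aemeasurable hf.aestronglyMeasurable]

lemma integrable_shift {Ω : Type*} [m : MeasurableSpace Ω] (P : Measure Ω) [IsProbabilityMeasure P]
    {ν : ℕ} (y : Fin ν → ℝ) (q : Ω → Fin ν → ℝ) (hq : Measurable q)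
    (hmom : ∀ n : ℕ, Integrable (fun ω => Real.sqrt (∑ i, q ω i ^ 2) ^ n) P) (j : ℕ) :
    Integrable (fun ω => (∑ i, (q ω i - y i) ^ 2) ^ j) P := by
  have h0 : ∀ k : ℕ, Integrable (fun ω => (∑ i, q ω i ^ 2) ^ k) P := by
    intro k
    refine (hmom (2 * k)).congr (Filter.Eventually.of_forall fun ω => ?_)
    dsimp only
    rw [pow_mul, Real.sq_sqrt (Finset.sum_nonneg fun i _ => sq_nonneg _)]
  have h1 : Integrable (fun ω => (2 * (∑ i, q ω i ^ 2) + 2 * ∑ i, y i ^ 2) ^ j) P := by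
    simp only [add_pow, mul_pow]
    refine integrable_finsetSum _ fun k _ => ?_
    exact (((h0 k).const_mul _).mul_const _).mul_const _
  refine h1.mono' ?_ (Filter.Eventually.of_forall fun ω => ?_)
  · refine Measurable.aestronglyMeasurable ?_
    exact (Finset.measurable_fun_sum _ fun i _ =>
      (((measurable_pi_apply i).comp hq).sub_const (y i)).pow_const 2).pow_const j
  · have hs : 0 ≤ ∑ i, (q ω i - y i) ^ 2 := Finset.sum_nonneg fun i _ => sq_nonneg _
    rw [Real.norm_of_nonneg (pow_nonneg hs _)]
    refine pow_le_pow_left₀ hs ?_ _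
    rw [Finset.mul_sum, Finset.mul_sum, ← Finset.sum_add_distrib]
    exact Finset.sum_le_sum fun i _ => by nlinarith [sq_nonneg (q ω i + y i)]

end BridgeAux

/-- Explicit moment formula for the drift `Y_t = (y − b_t)/(T−t)` of the
Brownian bridge from the `ℱ₀`-measurable `q` (with all moments finite) to `y` in time `T`:
for `p ∈ ℕ` and `t ∈ [0,T)`,
`E[|Y_t|^{2p}] = ∑_{ℓ=0}^{p} ((2p−2+ν)‼/(2(p−ℓ)−2+ν)‼) (p choose ℓ)
(E[|q−y|^{2(p−ℓ)}]/T^{2(p−ℓ)}) tˡ/(Tˡ (T−t)ˡ)`, Euclidean norms written via sums of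
squares. -/
theorem statement9 {Ω : Type*} [m : MeasurableSpace Ω] (P : Measure Ω) [IsProbabilityMeasure P]
    (ν : ℕ) (hν : 0 < ν) (F : Filtration ℝ m) (B : ℝ → Ω → Fin ν → ℝ)
    (hB : IsBrownianMotion P ν F B) (T : ℝ) (hT : 0 < T) (y : Fin ν → ℝ)
    (q : Ω → Fin ν → ℝ) (hq : Measurable[F 0] q)
    (hmom : ∀ n : ℕ, Integrable (fun ω => Real.sqrt (∑ i, q ω i ^ 2) ^ n) P)
    (p : ℕ) (hp : 0 < p) (t : ℝ) (ht : t ∈ Set.Ico 0 T) :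
    ∫ ω, (∑ i, ((T - t)⁻¹ • (y - bridgeBB ν T (q ω) y (fun s => B s ω) t)) i ^ 2) ^ p ∂P =
      ∑ ℓ ∈ Finset.range (p + 1),
        (dfacZ (2 * (p : ℤ) - 2 + (ν : ℤ)) /
            dfacZ (2 * ((p : ℤ) - (ℓ : ℤ)) - 2 + (ν : ℤ))) *
          (p.choose ℓ : ℝ) *
          ((∫ ω, (∑ i, (q ω i - y i) ^ 2) ^ (p - ℓ) ∂P) / T ^ (2 * (p - ℓ))) *
          (t ^ ℓ / (T ^ ℓ * (T - t) ^ ℓ)) := by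
  obtain ⟨ht0, htT⟩ := ht
  have hTt : 0 < T - t := by linarith
  have hqm : Measurable q := hq.mono (F.le 0) le_rfl
  set W : Ω → Fin ν → ℝ := fun ω => T⁻¹ • (y - q ω) with hWdef
  have hW : Measurable[F 0] W := (measurable_const.sub hq).const_smul T⁻¹
  have hWm : Measurable W := hW.mono (F.le 0) le_rfl
  have hGm := BridgeAux.meas_Gi hB T t ht0 htT
  set v : NNReal := Real.toNNReal (t / (T * (T - t))) with hv
  have hvc : (v : ℝ) = t / (T * (T - t)) := Real.coe_toNNReal _ (by positivity)
  have hlaw := BridgeAux.law_pair hB T t ht0 htT W hW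
  rw [← hv] at hlaw
  have hY : ∀ ω, (T - t)⁻¹ • (y - bridgeBB ν T (q ω) y (fun s => B s ω) t) =
      W ω - BridgeAux.Gi T t (fun s => B s ω) := by
    intro ω
    rw [bridgeBB, if_pos htT]
    ext i
    simp only [BridgeAux.Gi, hWdef, Pi.smul_apply, Pi.sub_apply, Pi.add_apply, smul_eq_mul]
    field_simp
    ring
  set Φ : (Fin ν → ℝ) × (Fin ν → ℝ) → ℝ := fun z => (∑ i, (z.1 i - z.2 i) ^ 2) ^ p with hΦ
  have hΦc : Continuous Φ := by fun_prop
  have hΦ0 : ∀ z, 0 ≤ Φ z := fun z =>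
    pow_nonneg (Finset.sum_nonneg fun i _ => sq_nonneg _) _
  have hprob := Measure.isProbabilityMeasure_map (μ := P) hWm.aemeasurable
  have hWsq : ∀ ω, ∑ i, W ω i ^ 2 = (∑ i, (q ω i - y i) ^ 2) / T ^ 2 := by
    intro ω
    rw [Finset.sum_div]
    refine Finset.sum_congr rfl fun i _ => ?_
    simp only [hWdef, Pi.smul_apply, Pi.sub_apply, smul_eq_mul]
    field_simp
    ring
  have hint := BridgeAux.integrable_shift P y q hqm hmom
  have hWpow : ∀ j : ℕ, Integrable (fun ω => (∑ i, W ω i ^ 2) ^ j) P := by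
    intro j
    simp only [hWsq, div_pow]
    exact (hint j).div_const _
  have hcS : Integrable (fun ω => BridgeAux.cS (BridgeAux.dD ν) (∑ i, W ω i ^ 2) v p) P := by
    unfold BridgeAux.cS
    exact integrable_finsetSum _ fun j _ => ((hWpow j).const_mul _).mul_const _
  have hcScont : Continuous (fun w : Fin ν → ℝ =>
      BridgeAux.cS (BridgeAux.dD ν) (∑ i, w i ^ 2) v p) := by
    unfold BridgeAux.cS
    fun_prop
  have hΦint : Integrable Φ ((P.map W).prod (BridgeAux.gpi (0 : Fin ν → ℝ) v)) := by
    rw [integrable_prod_iff hΦc.aestronglyMeasurable]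
    refine ⟨Filter.Eventually.of_forall fun w =>
      (BridgeAux.shifted_moment hν w v p).1, ?_⟩
    have e : (fun w => ∫ g, ‖Φ (w, g)‖ ∂(BridgeAux.gpi (0 : Fin ν → ℝ) v)) =
        fun w => BridgeAux.cS (BridgeAux.dD ν) (∑ i, w i ^ 2) v p := by
      funext w
      rw [← (BridgeAux.shifted_moment hν w v p).2]
      refine integral_congr_ae (Filter.Eventually.of_forall fun g => ?_)
      exact Real.norm_of_nonneg (hΦ0 _)
    rw [e]
    exact (integrable_map_measure hcScont.aestronglyMeasurable hWm.aemeasurable).2 hcS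
  have hmain : ∫ ω, (∑ i, ((T - t)⁻¹ •
      (y - bridgeBB ν T (q ω) y (fun s => B s ω) t)) i ^ 2) ^ p ∂P =
      ∫ ω, BridgeAux.cS (BridgeAux.dD ν) (∑ i, W ω i ^ 2) v p ∂P := by
    calc _ = ∫ ω, Φ (W ω, BridgeAux.Gi T t (fun s => B s ω)) ∂P := by
          simp only [hY, Pi.sub_apply, hΦ]
      _ = ∫ z, Φ z ∂(P.map (fun ω => (W ω, BridgeAux.Gi T t (fun s => B s ω)))) := by
          rw [integral_map (hWm.prodMk hGm).aemeasurable hΦc.aestronglyMeasurable]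
      _ = ∫ w, BridgeAux.cS (BridgeAux.dD ν) (∑ i, w i ^ 2) v p ∂(P.map W) := by
          rw [hlaw, integral_prod _ hΦint]
          refine integral_congr_ae (Filter.Eventually.of_forall fun w => ?_)
          exact (BridgeAux.shifted_moment hν w v p).2
      _ = _ := by
          rw [integral_map hWm.aemeasurable hcScont.aestronglyMeasurable]
  rw [hmain]
  unfold BridgeAux.cS
  rw [integral_finsetSum _ fun j _ => ((hWpow j).const_mul _).mul_const _,
    ← Finset.sum_range_reflect]
  refine Finset.sum_congr rfl fun l hl => ?_
  have hl : l ≤ p := by simpa [Nat.lt_succ_iff] using hl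
  have e1 : p + 1 - 1 - l = p - l := by omega
  have e2 : p - (p - l) = l := by omega
  rw [e1, e2, integral_mul_const, integral_const_mul, Nat.choose_symm hl]
  have e3 : dfacZ (2 * ((p : ℤ) - (l : ℤ)) - 2 + (ν : ℤ)) = BridgeAux.dD ν (p - l) := by
    rw [BridgeAux.dD, Nat.cast_sub hl]
  have e4 : dfacZ (2 * (p : ℤ) - 2 + (ν : ℤ)) = BridgeAux.dD ν p := rfl
  have e5 : ∫ ω, (∑ i, W ω i ^ 2) ^ (p - l) ∂P =
      (∫ ω, (∑ i, (q ω i - y i) ^ 2) ^ (p - l) ∂P) / T ^ (2 * (p - l)) := by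
    simp only [hWsq, div_pow, ← pow_mul]
    rw [integral_div]
  rw [e3, e4, e5, hvc, div_pow, mul_pow]
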